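/- For every integer p ≥ 6, the distinguishing index of the complete graph K_p equals 2, i.e., D'(K_p) = 2. -/

import Mathlib

open SimpleGraph

/-- The distinguishing number of a simple graph `G`: the least `d` such that there is a
vertex labeling with `d` labels preserved only by the trivial automorphism. -/
noncomputable def distinguishingNumber {V : Type*} (G : SimpleGraph V) : ℕ :=
  sInf {d : ℕ | ∃ φ : V → Fin d,
    ∀ f : G ≃g G, (∀ x : V, φ (f x) = φ x) → ∀ x : V, f x = x}

/-- The distinguishing index of a simple graph `G`: the least `d` such that there is an
edge labeling with `d` labels preserved only by the trivial automorphism. -/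
noncomputable def distinguishingIndex {V : Type*} (G : SimpleGraph V) : ℕ :=
  sInf {d : ℕ | ∃ ψ : G.edgeSet → Fin d,
    ∀ f : G ≃g G, (∀ e : G.edgeSet, ψ (f.mapEdgeSet e) = ψ e) → ∀ x : V, f x = x}

/-!
A set of edges of `K_p` is a graph `H` on the same vertices, and a permutation preserves the
2-labeling "in `H` or not" exactly when it is an automorphism of `H`. So it suffices to exhibit a
graph on `p` vertices without nontrivial automorphisms: the path `0 - 1 - ⋯ - (p - 1)` with the
extra edge `1 - 3`. Its only triangle is `1, 2, 3`, with tails of length `1` and `p - 4 ≥ 2`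
attached at `1` and `3`. The tails differ in length and cannot be exchanged, hence every vertex
up to `3` is fixed, and then so is every later vertex, one after the other. One label is not
enough, since `K_p` itself has nontrivial automorphisms.
-/

section Distinguishing

variable {V α β : Type*} {G H : SimpleGraph V}

/-- An asymmetric graph: the identity is its only automorphism. -/
def IsAsymmetric (G : SimpleGraph V) : Prop :=
  ∀ f : G ≃g G, ∀ x : V, f x = x

/-- A distinguishing edge labeling: only the identity automorphism preserves it. The labels come
from an arbitrary type, while `distinguishingIndex` uses labels in `Fin d`. -/
def IsDistinguishing (ψ : G.edgeSet → α) : Prop :=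
  ∀ f : G ≃g G, (∀ e : G.edgeSet, ψ (f.mapEdgeSet e) = ψ e) → ∀ x : V, f x = x

lemma IsDistinguishing.comp_injective {ψ : G.edgeSet → α} (hψ : IsDistinguishing ψ) {g : α → β}
    (hg : Function.Injective g) : IsDistinguishing (g ∘ ψ) :=
  fun f hf => hψ f fun e => hg (hf e)

lemma IsDistinguishing.isAsymmetric [Subsingleton α] {ψ : G.edgeSet → α}
    (hψ : IsDistinguishing ψ) : IsAsymmetric G :=
  fun f => hψ f fun _ => Subsingleton.elim _ _

lemma IsDistinguishing.distinguishingIndex_le_card [Fintype α] {ψ : G.edgeSet → α}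
    (hψ : IsDistinguishing ψ) : distinguishingIndex G ≤ Fintype.card α :=
  Nat.sInf_le ⟨_, hψ.comp_injective (Fintype.equivFin α).injective⟩

lemma IsDistinguishing.exists_fin_distinguishingIndex [Finite α] {ψ : G.edgeSet → α}
    (hψ : IsDistinguishing ψ) :
    ∃ φ : G.edgeSet → Fin (distinguishingIndex G), IsDistinguishing φ :=
  Nat.sInf_mem (s := {d | ∃ φ : G.edgeSet → Fin d, IsDistinguishing φ})
    ⟨_, _, hψ.comp_injective (Finite.equivFin α).injective⟩

lemma IsDistinguishing.two_le_distinguishingIndex [Finite α] {ψ : G.edgeSet → α}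
    (hψ : IsDistinguishing ψ) (hG : ¬ IsAsymmetric G) : 2 ≤ distinguishingIndex G := by
  obtain ⟨φ, hφ⟩ := hψ.exists_fin_distinguishingIndex
  by_contra! hlt
  have : Subsingleton (Fin (distinguishingIndex G)) :=
    Fin.subsingleton_iff_le_one.2 (Nat.le_of_lt_succ hlt)
  exact hG hφ.isAsymmetric

lemma IsAsymmetric.isDistinguishing_mem_edgeSet (hH : IsAsymmetric H) (hHG : H ≤ G) :
    IsDistinguishing fun e : G.edgeSet => (e : Sym2 V) ∈ H.edgeSet := by
  intro f hf
  have map_adj_iff {a b : V} : H.Adj (f a) (f b) ↔ H.Adj a b := by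
    by_cases hab : G.Adj a b
    · exact iff_of_eq (hf ⟨s(a, b), hab⟩)
    · exact iff_of_false (fun h => hab (f.map_adj_iff.1 (hHG h))) fun h => hab (hHG h)
  exact hH ⟨f.toEquiv, map_adj_iff⟩

theorem distinguishingIndex_eq_two_of_isAsymmetric_le (hHG : H ≤ G) (hH : IsAsymmetric H)
    (hG : ¬ IsAsymmetric G) : distinguishingIndex G = 2 := by
  have hψ := hH.isDistinguishing_mem_edgeSet hHG
  exact le_antisymm (hψ.distinguishingIndex_le_card.trans_eq Fintype.card_prop)
    (hψ.two_le_distinguishingIndex hG)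

lemma not_isAsymmetric_top [Nontrivial V] : ¬ IsAsymmetric (⊤ : SimpleGraph V) := by
  classical
  obtain ⟨a, b, hab⟩ := exists_pair_ne V
  intro h
  have hswap : Equiv.swap a b a = a := h (Iso.completeGraph (Equiv.swap a b)) a
  exact hab (hswap.symm.trans (Equiv.swap_apply_left a b))

end Distinguishing

section ChordedPath

variable {m n : ℕ}

/-- The path `0 - 1 - ⋯ - (n - 1)` together with the chord `1 - 3`, an asymmetric graph for
`6 ≤ n`. The chord is given by a relation on values, so that `n` is arbitrary; it is absent for
`n ≤ 3`. -/
def chordedPath (n : ℕ) : SimpleGraph (Fin n) :=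
  pathGraph n ⊔ fromRel fun u v => u.val = 1 ∧ v.val = 3

lemma chordedPath_adj {u v : Fin n} : (chordedPath n).Adj u v ↔
    u.val + 1 = v.val ∨ v.val + 1 = u.val ∨
      (u.val = 1 ∧ v.val = 3) ∨ (u.val = 3 ∧ v.val = 1) := by
  simp only [chordedPath, sup_adj, pathGraph_adj, fromRel_adj, ne_eq, Fin.ext_iff]
  omega

lemma chordedPath_val_bounds_of_triangle {u v w : Fin n} (huv : (chordedPath n).Adj u v)
    (hvw : (chordedPath n).Adj v w) (huw : (chordedPath n).Adj u w) :
    1 ≤ u.val ∧ u.val ≤ 3 := by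
  rw [chordedPath_adj] at huv hvw huw
  omega

lemma chordedPath_adj_outside_triangle {u v : Fin n} (huv : (chordedPath n).Adj u v)
    (hu : ¬(1 ≤ u.val ∧ u.val ≤ 3)) (hv : 1 ≤ v.val ∧ v.val ≤ 3) :
    u.val = 0 ∧ v.val = 1 ∨ u.val = 4 ∧ v.val = 3 := by
  rw [chordedPath_adj] at huv
  omega

instance : DecidableRel (chordedPath n).Adj :=
  fun _ _ => decidable_of_iff' _ chordedPath_adj

/-- The inclusion of the first `m` vertices of a chorded path, used to reduce to six vertices. -/
def chordedPathCastLE (h : m ≤ n) : chordedPath m →g chordedPath n where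
  toFun := Fin.castLE h
  map_rel' huv := by simpa only [chordedPath_adj, Fin.val_castLE] using huv

lemma chordedPath_six_hom_val_of_le_three {f : chordedPath 6 →g chordedPath n}
    (hf : Function.Injective f) :
    (f 0).val = 0 ∧ (f 1).val = 1 ∧ (f 2).val = 2 ∧ (f 3).val = 3 := by
  have adj (i j : Fin 6) (h : (chordedPath 6).Adj i j := by decide) :
      (chordedPath n).Adj (f i) (f j) := f.map_adj h
  have val_ne (i j : Fin 6) (h : i ≠ j := by decide) : (f i).val ≠ (f j).val :=
    Fin.val_ne_of_ne (hf.ne h)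
  have triangle₁ := chordedPath_val_bounds_of_triangle (adj 1 2) (adj 2 3) (adj 1 3)
  have triangle₂ := chordedPath_val_bounds_of_triangle (adj 2 3) (adj 3 1) (adj 2 1)
  have triangle₃ := chordedPath_val_bounds_of_triangle (adj 3 1) (adj 1 2) (adj 3 2)
  have ne₁₂ := val_ne 1 2
  have ne₂₃ := val_ne 2 3
  have ne₁₃ := val_ne 1 3
  have not_triangle (i : Fin 6) (h1 : i ≠ 1 := by decide) (h2 : i ≠ 2 := by decide)
      (h3 : i ≠ 3 := by decide) : ¬(1 ≤ (f i).val ∧ (f i).val ≤ 3) := by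
    have := val_ne i 1 h1
    have := val_ne i 2 h2
    have := val_ne i 3 h3
    omega
  have tail₁ : (f 0).val = 0 ∧ (f 1).val = 1 ∨ (f 0).val = 4 ∧ (f 1).val = 3 :=
    chordedPath_adj_outside_triangle (adj 0 1) (not_triangle 0) triangle₁
  have tail₃ : (f 4).val = 0 ∧ (f 3).val = 1 ∨ (f 4).val = 4 ∧ (f 3).val = 3 :=
    chordedPath_adj_outside_triangle (adj 4 3) (not_triangle 4) triangle₃
  -- `0` has a single neighbour, while `4` has the two neighbours `3` and `5`.
  have four_ne_zero : (f 4).val ≠ 0 := by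
    have := chordedPath_adj.1 (adj 4 5)
    have := val_ne 3 5
    omega
  omega

theorem chordedPath_hom_val (hm : 6 ≤ m) {f : chordedPath m →g chordedPath n}
    (hf : Function.Injective f) (i : Fin m) : (f i).val = i.val := by
  obtain ⟨h0, h1, h2, h3⟩ :=
    chordedPath_six_hom_val_of_le_three (f := f.comp (chordedPathCastLE hm))
      (hf.comp (Fin.castLE_injective hm))
  obtain ⟨k, hk⟩ := i
  induction k using Nat.strong_induction_on with
  | _ k ih =>
    match k with
    | 0 => exact h0
    | 1 => exact h1
    | 2 => exact h2
    | 3 => exact h3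
    | k + 4 =>
      -- All neighbours of `k + 3` other than `k + 4` are already taken as images.
      have hprev : (f ⟨k + 3, by omega⟩).val = k + 3 := ih (k + 3) (by omega) (by omega)
      have hadj : (chordedPath n).Adj (f ⟨k + 3, by omega⟩) (f ⟨k + 4, hk⟩) :=
        f.map_adj (chordedPath_adj.2 (.inl rfl))
      have val_ne (j : ℕ) (hj : j < k + 4) : (f ⟨k + 4, hk⟩).val ≠ j := fun h =>
        hj.ne (congrArg Fin.val (hf (Fin.ext ((ih j hj (hj.trans hk)).trans h.symm))))
      have ne_one := val_ne 1 (by omega)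
      have ne_prev_prev := val_ne (k + 2) (by omega)
      rw [chordedPath_adj, hprev] at hadj
      change (f ⟨k + 4, hk⟩).val = k + 4
      omega

theorem chordedPath_isAsymmetric (hn : 6 ≤ n) : IsAsymmetric (chordedPath n) :=
  fun f i => Fin.ext (chordedPath_hom_val hn (f := f.toHom) f.injective i)

end ChordedPath

/-- For every `p ≥ 6`, the distinguishing index of the complete graph `K_p` equals `2`. -/
theorem distinguishingIndex_completeGraph (p : ℕ) (hp : 6 ≤ p) :
    distinguishingIndex (⊤ : SimpleGraph (Fin p)) = 2 := by
  have : Nontrivial (Fin p) := Fin.nontrivial_iff_two_le.2 (by omega)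
  exact distinguishingIndex_eq_two_of_isAsymmetric_le le_top (chordedPath_isAsymmetric hp)
    not_isAsymmetric_top
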